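/- Let (X,T) be a topological dynamical system with a compatible metric d, let μ be a T-invariant Borel probability measure, let ε>0, and let P be a finite Borel partition of X with diam P ≤ ε. Then for every s>0, R_{μ,L∞}(2ε,s) ≤ h_μ(T,P). -/

import Mathlib

open Filter MeasureTheory Set
open scoped ENNReal Topology

noncomputable section

namespace MMD

variable {X : Type*}

/-- The `n`-th Bowen metric `d_n(x,y) = max_{0 ≤ j ≤ n-1} d(T^j x, T^j y)`. -/
noncomputable def bowenDist [PseudoMetricSpace X] (T : X → X) (n : ℕ) (x y : X) : ℝ :=
  ⨆ j : Fin n, dist (T^[(j : ℕ)] x) (T^[(j : ℕ)] y)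

/-- `r_n(T,d,ε,Z)`: minimal cardinality of an `(n,ε)`-spanning set of `Z`. -/
noncomputable def spanNum [PseudoMetricSpace X] (T : X → X) (n : ℕ) (ε : ℝ) (Z : Set X) : ℕ :=
  sInf {k | ∃ E : Finset X, E.card = k ∧ ∀ z ∈ Z, ∃ y ∈ E, bowenDist T n z y < ε}

/-- `s_n(T,d,ε,Z)`: maximal cardinality of an `(n,ε)`-separated subset of `Z`. -/
noncomputable def sepNum [PseudoMetricSpace X] (T : X → X) (n : ℕ) (ε : ℝ) (Z : Set X) : ℕ :=
  sSup {k | ∃ F : Finset X, ↑F ⊆ Z ∧ F.card = k ∧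
    ∀ x ∈ F, ∀ y ∈ F, x ≠ y → ε ≤ bowenDist T n x y}

/-- `limsup_{n→∞} (1/n) log r_n(T,d,ε,X)`. -/
noncomputable def spanGrowth [PseudoMetricSpace X] (T : X → X) (ε : ℝ) : ℝ≥0∞ :=
  Filter.limsup (fun n : ℕ => ENNReal.ofReal (Real.log (spanNum T n ε Set.univ)) / (n : ℝ≥0∞))
    Filter.atTop

/-- Upper metric mean dimension. -/
noncomputable def mdimMUpper [PseudoMetricSpace X] (T : X → X) : ℝ≥0∞ :=
  Filter.limsup (fun ε : ℝ => spanGrowth T ε / ENNReal.ofReal (Real.log (1 / ε)))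
    (nhdsWithin 0 (Set.Ioi 0))

/-- Lower metric mean dimension. -/
noncomputable def mdimMLower [PseudoMetricSpace X] (T : X → X) : ℝ≥0∞ :=
  Filter.liminf (fun ε : ℝ => spanGrowth T ε / ENNReal.ofReal (Real.log (1 / ε)))
    (nhdsWithin 0 (Set.Ioi 0))

/-- A finite (Borel) partition given as a finite set of measurable, pairwise disjoint sets
covering the space. -/
def IsFinPartition {Y : Type*} [MeasurableSpace Y] (P : Finset (Set Y)) : Prop :=
  (∀ s ∈ P, MeasurableSet s) ∧ (∀ s ∈ P, ∀ t ∈ P, s ≠ t → Disjoint s t) ∧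
    ⋃₀ (P : Set (Set Y)) = Set.univ

/-- Mutual information `I(ξ;η)` of two random variables, as the supremum over finite
measurable partitions of the target spaces. -/
noncomputable def mutualInfo {Ω A B : Type*} [MeasurableSpace Ω] [MeasurableSpace A]
    [MeasurableSpace B] (P : Measure Ω) (ξ : Ω → A) (η : Ω → B) : ℝ≥0∞ :=
  ⨆ (p : Finset (Set A)) (_ : IsFinPartition p) (q : Finset (Set B)) (_ : IsFinPartition q),
    ENNReal.ofReal (∑ s ∈ p, ∑ t ∈ q,
      (P (ξ ⁻¹' s ∩ η ⁻¹' t)).toReal *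
        Real.log ((P (ξ ⁻¹' s ∩ η ⁻¹' t)).toReal /
          ((P (ξ ⁻¹' s)).toReal * (P (η ⁻¹' t)).toReal)))

/-- The `L^∞` rate distortion function `R_{μ,L∞}(ε,s)`: the infimum of `I(ξ;η)/n` over all
`n ≥ 1` and all joint distributions `ν` of `(ξ, (η_0,…,η_{n-1}))` such that `ξ` has law `μ`,
the `η_k` take (almost surely) finitely many values, and
`E(#{0 ≤ k ≤ n-1 : d(T^k ξ, η_k) ≥ ε}) < s n`. -/
noncomputable def RDistLInftyS [PseudoMetricSpace X] [MeasurableSpace X] (T : X → X)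
    (μ : Measure X) (ε s : ℝ) : ℝ≥0∞ :=
  ⨅ (n : ℕ) (_ : 0 < n) (ν : Measure (X × (Fin n → X))) (_ : IsProbabilityMeasure ν)
    (_ : ν.map Prod.fst = μ) (_ : ∃ S : Finset X, ν {p | ∀ k, p.2 k ∈ S} = 1)
    (_ : ∫⁻ p, (Nat.card {k : Fin n // ε ≤ dist (T^[(k : ℕ)] p.1) (p.2 k)} : ℝ≥0∞) ∂ν
        < ENNReal.ofReal (s * n)),
    mutualInfo ν Prod.fst Prod.snd / (n : ℝ≥0∞)

/-- `R_{μ,L∞}(ε) = lim_{s→0} R_{μ,L∞}(ε,s)` (the limit equals the supremum over `s > 0`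
by monotonicity). -/
noncomputable def RDistLInfty [PseudoMetricSpace X] [MeasurableSpace X] (T : X → X)
    (μ : Measure X) (ε : ℝ) : ℝ≥0∞ :=
  ⨆ (s : ℝ) (_ : 0 < s), RDistLInftyS T μ ε s

/-- The `L¹` rate distortion function `R_{μ,1}(ε)`. -/
noncomputable def RDistL1 [PseudoMetricSpace X] [MeasurableSpace X] (T : X → X)
    (μ : Measure X) (ε : ℝ) : ℝ≥0∞ :=
  ⨅ (n : ℕ) (_ : 0 < n) (ν : Measure (X × (Fin n → X))) (_ : IsProbabilityMeasure ν)
    (_ : ν.map Prod.fst = μ) (_ : ∃ S : Finset X, ν {p | ∀ k, p.2 k ∈ S} = 1)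
    (_ : ∫⁻ p, ∑ k : Fin n, ENNReal.ofReal (dist (T^[(k : ℕ)] p.1) (p.2 k)) ∂ν
        < ENNReal.ofReal (ε * n)),
    mutualInfo ν Prod.fst Prod.snd / (n : ℝ≥0∞)

/-- `R^δ_μ(T,n,ε)`: minimal number of Bowen `(n,ε)`-balls whose union has `μ`-measure
greater than `1 - δ`. -/
noncomputable def katokNum [PseudoMetricSpace X] [MeasurableSpace X] (T : X → X)
    (μ : Measure X) (n : ℕ) (ε δ : ℝ) : ℕ :=
  sInf {k | ∃ E : Finset X, E.card = k ∧
    ENNReal.ofReal (1 - δ) < μ (⋃ x ∈ E, {y | bowenDist T n x y < ε})}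

/-- `h̄^K_μ(T,ε,δ)`. -/
noncomputable def katokUpperD [PseudoMetricSpace X] [MeasurableSpace X] (T : X → X)
    (μ : Measure X) (ε δ : ℝ) : ℝ≥0∞ :=
  Filter.limsup (fun n : ℕ => ENNReal.ofReal (Real.log (katokNum T μ n ε δ)) / (n : ℝ≥0∞))
    Filter.atTop

/-- `ḥ^K_μ(T,ε,δ)`. -/
noncomputable def katokLowerD [PseudoMetricSpace X] [MeasurableSpace X] (T : X → X)
    (μ : Measure X) (ε δ : ℝ) : ℝ≥0∞ :=
  Filter.liminf (fun n : ℕ => ENNReal.ofReal (Real.log (katokNum T μ n ε δ)) / (n : ℝ≥0∞))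
    Filter.atTop

/-- `h̄^K_μ(T,ε) = lim_{δ→0} h̄^K_μ(T,ε,δ)` (equal to the supremum over `δ ∈ (0,1)` by
monotonicity). -/
noncomputable def katokUpper [PseudoMetricSpace X] [MeasurableSpace X] (T : X → X)
    (μ : Measure X) (ε : ℝ) : ℝ≥0∞ :=
  ⨆ (δ : ℝ) (_ : δ ∈ Set.Ioo (0 : ℝ) 1), katokUpperD T μ ε δ

/-- `ḥ^K_μ(T,ε) = lim_{δ→0} ḥ^K_μ(T,ε,δ)`. -/
noncomputable def katokLower [PseudoMetricSpace X] [MeasurableSpace X] (T : X → X)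
    (μ : Measure X) (ε : ℝ) : ℝ≥0∞ :=
  ⨆ (δ : ℝ) (_ : δ ∈ Set.Ioo (0 : ℝ) 1), katokLowerD T μ ε δ

/-- The empirical measure `(1/n) Σ_{j=0}^{n-1} δ_{T^j x}`. -/
noncomputable def empMeas [MeasurableSpace X] (T : X → X) (n : ℕ) (x : X) : Measure X :=
  (n : ℝ≥0∞)⁻¹ • ∑ j ∈ Finset.range n, Measure.dirac (T^[j] x)

/-- Pfister–Sullivan entropy `PS_μ(T,d,ε)`: infimum over weak* open neighborhoods `F` of `μ`
of `limsup_n (1/n) log s_n(T,d,ε,X_{n,F})`, where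
`X_{n,F} = {x : (1/n) Σ_{j<n} δ_{T^j x} ∈ F}`. -/
noncomputable def PSent [MetricSpace X] [MeasurableSpace X] [OpensMeasurableSpace X]
    (T : X → X) (μ : ProbabilityMeasure X) (ε : ℝ) : ℝ≥0∞ :=
  ⨅ (F : Set (ProbabilityMeasure X)) (_ : IsOpen F) (_ : μ ∈ F),
    Filter.limsup (fun n : ℕ => ENNReal.ofReal (Real.log (sepNum T n ε
      {x : X | ∃ h : IsProbabilityMeasure (empMeas T n x),
        (⟨empMeas T n x, h⟩ : ProbabilityMeasure X) ∈ F})) / (n : ℝ≥0∞)) Filter.atTop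

/-- Partition entropy `H_μ(P) = Σ_{A∈P} -μ(A) log μ(A)`. -/
noncomputable def entP [MeasurableSpace X] (μ : Measure X) (P : Finset (Set X)) : ℝ≥0∞ :=
  ∑ A ∈ P, ENNReal.ofReal (-((μ A).toReal * Real.log ((μ A).toReal)))

/-- The join `P^n = ∨_{j=0}^{n-1} T^{-j} P`. -/
noncomputable def joinN (T : X → X) (P : Finset (Set X)) (n : ℕ) : Finset (Set X) :=
  letI : DecidableEq (Set X) := Classical.decEq _
  (Fintype.piFinset (fun _ : Fin n => P)).image (fun f => ⋂ j : Fin n, T^[(j : ℕ)] ⁻¹' f j)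

/-- `h_μ(T,P) = lim_n H_μ(P^n)/n` (the limit exists and equals the liminf). -/
noncomputable def entRate [MeasurableSpace X] (T : X → X) (μ : Measure X)
    (P : Finset (Set X)) : ℝ≥0∞ :=
  Filter.liminf (fun n : ℕ => entP μ (joinN T P n) / (n : ℝ≥0∞)) Filter.atTop

/-- `inf { h_μ(T,P) : P a finite Borel partition with diam P ≤ ε }`. -/
noncomputable def infEntRate [PseudoMetricSpace X] [MeasurableSpace X] (T : X → X)
    (μ : Measure X) (ε : ℝ) : ℝ≥0∞ :=
  ⨅ (P : Finset (Set X)) (_ : IsFinPartition P) (_ : ∀ s ∈ P, Metric.diam s ≤ ε),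
    entRate T μ P

/-- Kolmogorov–Sinai entropy `h_μ(T)`. -/
noncomputable def ksEntropy [MeasurableSpace X] (T : X → X) (μ : Measure X) : ℝ≥0∞ :=
  ⨆ (P : Finset (Set X)) (_ : IsFinPartition P), entRate T μ P

/-- A finite open cover. -/
def IsFinOpenCover [TopologicalSpace X] (α : Finset (Set X)) : Prop :=
  (∀ A ∈ α, IsOpen A) ∧ ⋃₀ (α : Set (Set X)) = Set.univ

/-- `ord(β) = max_x #{B ∈ β : x ∈ B} - 1`. -/
noncomputable def ordCover (β : Finset (Set X)) : ℕ :=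
  sSup {k | ∃ x : X, Nat.card {B : Set X // B ∈ β ∧ x ∈ B} = k} - 1

/-- `D(α) = min_{β ≻ α} ord(β)`, over finite open covers `β` refining `α`. -/
noncomputable def Dcover [TopologicalSpace X] (α : Finset (Set X)) : ℕ :=
  sInf {k | ∃ β : Finset (Set X), IsFinOpenCover β ∧ (∀ B ∈ β, ∃ A ∈ α, B ⊆ A) ∧
    ordCover β = k}

/-- Mean (topological) dimension `mdim(X,T) = sup_α lim_n D(α^n)/n`. -/
noncomputable def mdimTop [TopologicalSpace X] (T : X → X) : ℝ≥0∞ :=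
  ⨆ (α : Finset (Set X)) (_ : IsFinOpenCover α),
    Filter.liminf (fun n : ℕ => (Dcover (joinN T α n) : ℝ≥0∞) / (n : ℝ≥0∞)) Filter.atTop

/-- The marker property for a homeomorphism. -/
def MarkerProperty [TopologicalSpace X] (T : X ≃ₜ X) : Prop :=
  ∀ N : ℕ, 0 < N → ∃ U : Set X, IsOpen U ∧
    (∀ n : ℕ, 1 ≤ n → n ≤ N → U ∩ (⇑T)^[n] '' U = ∅) ∧
    ⋃ n : ℤ, ⇑(T.toEquiv ^ n) '' U = Set.univ

/-- Upper dimension `limsup_{ε→0} F(μ,ε)/log(1/ε)` associated with a candidate `F`. -/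
noncomputable def dimFUpper [MeasurableSpace X] (F : Measure X → ℝ → ℝ≥0∞)
    (μ : Measure X) : ℝ≥0∞ :=
  Filter.limsup (fun ε : ℝ => F μ ε / ENNReal.ofReal (Real.log (1 / ε)))
    (nhdsWithin 0 (Set.Ioi 0))

/-- Lower dimension `liminf_{ε→0} F(μ,ε)/log(1/ε)` associated with a candidate `F`. -/
noncomputable def dimFLower [MeasurableSpace X] (F : Measure X → ℝ → ℝ≥0∞)
    (μ : Measure X) : ℝ≥0∞ :=
  Filter.liminf (fun ε : ℝ => F μ ε / ENNReal.ofReal (Real.log (1 / ε)))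
    (nhdsWithin 0 (Set.Ioi 0))

/-- A candidate function: for each invariant probability measure `μ`, `F(μ,·)` is
non-decreasing as `ε` decreases, and `F(μ,ε) → h_μ(T)` as `ε → 0⁺`. -/
def IsCandidate [MeasurableSpace X] (T : X → X) (F : Measure X → ℝ → ℝ≥0∞) : Prop :=
  ∀ μ : Measure X, IsProbabilityMeasure μ → MeasurePreserving T μ μ →
    (∀ ε₁ ε₂ : ℝ, 0 < ε₁ → ε₁ ≤ ε₂ → F μ ε₂ ≤ F μ ε₁) ∧
    Filter.Tendsto (F μ) (nhdsWithin 0 (Set.Ioi 0)) (nhds (ksEntropy T μ))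

end MMD

open MMD

/-! Choose a point in each cell of `P` and let `η_k` be the chosen point of the cell of `P`
containing `T^k ξ`. Two points of a cell of `P` are less than `2ε` apart, so `d(T^k ξ, η_k) ≥ 2ε`
never occurs, and `η` is a function of the cell of `P^n` containing `ξ`. Hence
`I(ξ;η) ≤ H(η) ≤ H_μ(P^n)` for every `n ≥ 1`. -/

namespace MMD

section RealInequalities

theorem mul_log_le_mul_log {x y : ℝ} (hx : 0 ≤ x) (hxy : x ≤ y) :
    x * Real.log x ≤ x * Real.log y := by
  rcases hx.eq_or_lt with rfl | hx_pos
  · simp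
  · gcongr

theorem mul_log_div_mul_le {x y z : ℝ} (hx : 0 ≤ x) (hxy : x ≤ y) (hxz : x ≤ z) :
    x * Real.log (x / (y * z)) ≤ x * -Real.log z := by
  rcases hx.eq_or_lt with rfl | hx_pos
  · simp
  · have hy : y ≠ 0 := (hx_pos.trans_le hxy).ne'
    have hz : z ≠ 0 := (hx_pos.trans_le hxz).ne'
    rw [Real.log_div hx_pos.ne' (mul_ne_zero hy hz), Real.log_mul hy hz]
    linarith [mul_log_le_mul_log hx hxy]

theorem negMulLog_sum_le {ι : Type*} {s : Finset ι} {f : ι → ℝ} (hf : ∀ i ∈ s, 0 ≤ f i) :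
    Real.negMulLog (∑ i ∈ s, f i) ≤ ∑ i ∈ s, Real.negMulLog (f i) := by
  simp only [Real.negMulLog_eq_neg, Finset.sum_mul, Finset.sum_neg_distrib]
  exact neg_le_neg <| Finset.sum_le_sum fun i hi =>
    mul_log_le_mul_log (hf i hi) (Finset.single_le_sum hf hi)

end RealInequalities

section Partition

variable {Ω Y Z : Type*} {P : Finset (Set Y)}

/-- `f` is constant on each member of `P`. For a partition `P` this says that `f` is a function of
the cell of `P` containing its argument. -/
def ConstOnCells (P : Finset (Set Y)) (f : Y → Z) : Prop :=
  ∀ A ∈ P, ∀ x ∈ A, ∀ y ∈ A, f x = f y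

theorem ConstOnCells.preimage_inter_eq_self_or_empty {f : Y → Z} (hf : ConstOnCells P f)
    {A : Set Y} (hA : A ∈ P) (t : Set Z) : f ⁻¹' t ∩ A = A ∨ f ⁻¹' t ∩ A = ∅ := by
  refine (f ⁻¹' t ∩ A).eq_empty_or_nonempty.symm.imp_left ?_
  rintro ⟨x, hxt, hxA⟩
  refine inter_eq_right.2 fun y hy => ?_
  rwa [mem_preimage, hf A hA y hy x hxA]

variable [MeasurableSpace Y]

theorem IsFinPartition.exists_mem (hP : IsFinPartition P) (y : Y) : ∃ A ∈ P, y ∈ A :=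
  mem_sUnion.1 (hP.2.2 ▸ mem_univ y)

theorem IsFinPartition.eq_of_mem (hP : IsFinPartition P) {A B : Set Y} (hA : A ∈ P) (hB : B ∈ P)
    {y : Y} (hyA : y ∈ A) (hyB : y ∈ B) : A = B := by
  by_contra hAB
  exact disjoint_left.1 (hP.2.1 A hA B hB hAB) hyA hyB

theorem IsFinPartition.sum_measureReal_preimage_inter [MeasurableSpace Ω] {μ : Measure Ω}
    [IsFiniteMeasure μ] (hP : IsFinPartition P) {f : Ω → Y} (hf : Measurable f) (s : Set Ω) :
    ∑ A ∈ P, μ.real (f ⁻¹' A ∩ s) = μ.real s := by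
  have hmeas : ∀ A ∈ P, MeasurableSet (f ⁻¹' A) := fun A hA => hf (hP.1 A hA)
  have hdisj : (P : Set (Set Y)).PairwiseDisjoint (f ⁻¹' ·) := fun A hA B hB hAB =>
    (hP.2.1 A hA B hB hAB).preimage f
  have hcover : ⋃ A ∈ P, f ⁻¹' A = univ :=
    eq_univ_of_forall fun ω => mem_iUnion₂.2 <| by simpa using hP.exists_mem (f ω)
  calc ∑ A ∈ P, μ.real (f ⁻¹' A ∩ s) = ∑ A ∈ P, (μ.restrict s).real (f ⁻¹' A) :=
        Finset.sum_congr rfl fun A hA => (measureReal_restrict_apply (hmeas A hA)).symm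
    _ = (μ.restrict s).real (⋃ A ∈ P, f ⁻¹' A) := (measureReal_biUnion_finset hdisj hmeas).symm
    _ = μ.real s := by rw [hcover, measureReal_restrict_apply_univ]

theorem ConstOnCells.measurable [MeasurableSpace Z] {f : Y → Z} (hf : ConstOnCells P f)
    (hP : IsFinPartition P) : Measurable f := by
  intro t _
  have hcells : f ⁻¹' t = ⋃ A ∈ P, f ⁻¹' t ∩ A := by
    ext x
    simpa using fun _ => hP.exists_mem x
  rw [hcells]
  refine P.measurableSet_biUnion fun A hA => ?_
  rcases hf.preimage_inter_eq_self_or_empty hA t with h | h <;> rw [h]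
  exacts [hP.1 A hA, .empty]

theorem ConstOnCells.finite_range {f : Y → Z} (hf : ConstOnCells P f) (hP : IsFinPartition P) :
    (range f).Finite := by
  have himage : ∀ A ∈ P, (f '' A).Finite := fun A hA => Set.Subsingleton.finite <| by
    rintro _ ⟨x, hx, rfl⟩ _ ⟨y, hy, rfl⟩
    exact hf A hA x hx y hy
  refine (P.finite_toSet.biUnion himage).subset ?_
  rintro _ ⟨x, rfl⟩
  obtain ⟨A, hA, hxA⟩ := hP.exists_mem x
  exact mem_biUnion hA (mem_image_of_mem f hxA)

theorem IsFinPartition.exists_constOnCells_mem (hP : IsFinPartition P) :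
    ∃ c : Y → Y, ConstOnCells P c ∧ ∀ A ∈ P, ∀ x ∈ A, c x ∈ A := by
  choose cell hcell hmem using hP.exists_mem
  have hcell_eq : ∀ A ∈ P, ∀ x ∈ A, cell x = A := fun A hA x hx =>
    hP.eq_of_mem (hcell x) hA (hmem x) hx
  have hne : ∀ x, (cell x).Nonempty := fun x => ⟨x, hmem x⟩
  refine ⟨fun x => (hne x).some, fun A hA x hx y hy => ?_,
    fun A hA x hx => (hcell_eq A hA x hx).subset (hne x).some_mem⟩
  simp only [hcell_eq A hA x hx, hcell_eq A hA y hy]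

end Partition

section Information

variable {Ω A B : Type*} [MeasurableSpace Ω] [MeasurableSpace A]
  {μ : Measure Ω} {ξ : Ω → A} {η : Ω → B}

theorem entP_eq_ofReal_sum_negMulLog [IsProbabilityMeasure μ] (P : Finset (Set Ω)) :
    entP μ P = ENNReal.ofReal (∑ C ∈ P, Real.negMulLog (μ.real C)) := by
  rw [ENNReal.ofReal_sum_of_nonneg fun C _ =>
    Real.negMulLog_nonneg measureReal_nonneg measureReal_le_one]
  simp only [entP, Real.negMulLog_eq_neg, measureReal_def]

theorem sum_sum_mul_log_le_sum_negMulLog [IsFiniteMeasure μ] {p : Finset (Set A)}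
    (hp : IsFinPartition p) (hξ : Measurable ξ) (q : Finset (Set B)) :
    ∑ s ∈ p, ∑ t ∈ q, μ.real (ξ ⁻¹' s ∩ η ⁻¹' t) *
        Real.log (μ.real (ξ ⁻¹' s ∩ η ⁻¹' t) / (μ.real (ξ ⁻¹' s) * μ.real (η ⁻¹' t))) ≤
      ∑ t ∈ q, Real.negMulLog (μ.real (η ⁻¹' t)) :=
  calc _ ≤ ∑ s ∈ p, ∑ t ∈ q, μ.real (ξ ⁻¹' s ∩ η ⁻¹' t) * -Real.log (μ.real (η ⁻¹' t)) := by
        refine Finset.sum_le_sum fun s _ => Finset.sum_le_sum fun t _ => ?_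
        exact mul_log_div_mul_le measureReal_nonneg (measureReal_mono inter_subset_left)
          (measureReal_mono inter_subset_right)
    _ = ∑ t ∈ q, Real.negMulLog (μ.real (η ⁻¹' t)) := by
        rw [Finset.sum_comm]
        refine Finset.sum_congr rfl fun t _ => ?_
        rw [← Finset.sum_mul, hp.sum_measureReal_preimage_inter hξ, Real.negMulLog, mul_neg,
          neg_mul]

variable [MeasurableSpace B]

theorem mutualInfo_map {Ω' : Type*} [MeasurableSpace Ω'] {g : Ω' → Ω} {ν : Measure Ω'}
    (hg : Measurable g) (hξ : Measurable ξ) (hη : Measurable η) :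
    mutualInfo (ν.map g) ξ η = mutualInfo ν (ξ ∘ g) (η ∘ g) := by
  refine iSup_congr fun p => iSup_congr fun hp => iSup_congr fun q => iSup_congr fun hq =>
    congrArg ENNReal.ofReal <| Finset.sum_congr rfl fun s hs => Finset.sum_congr rfl fun t ht => ?_
  have hξs : MeasurableSet (ξ ⁻¹' s) := hξ (hp.1 s hs)
  have hηt : MeasurableSet (η ⁻¹' t) := hη (hq.1 t ht)
  rw [Measure.map_apply hg (hξs.inter hηt), Measure.map_apply hg hξs, Measure.map_apply hg hηt]
  simp only [preimage_comp, preimage_inter]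

theorem ConstOnCells.sum_negMulLog_preimage_le [IsFiniteMeasure μ] {Q : Finset (Set Ω)}
    (hη : ConstOnCells Q η) (hQ : IsFinPartition Q) {q : Finset (Set B)} (hq : IsFinPartition q) :
    ∑ t ∈ q, Real.negMulLog (μ.real (η ⁻¹' t)) ≤ ∑ C ∈ Q, Real.negMulLog (μ.real C) :=
  calc ∑ t ∈ q, Real.negMulLog (μ.real (η ⁻¹' t))
      = ∑ t ∈ q, Real.negMulLog (∑ C ∈ Q, μ.real (C ∩ η ⁻¹' t)) := by
        refine Finset.sum_congr rfl fun t _ => ?_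
        exact congrArg _ (hQ.sum_measureReal_preimage_inter measurable_id _).symm
    _ ≤ ∑ t ∈ q, ∑ C ∈ Q, Real.negMulLog (μ.real (C ∩ η ⁻¹' t)) := by
        gcongr
        exact negMulLog_sum_le fun _ _ => measureReal_nonneg
    _ = ∑ C ∈ Q, ∑ t ∈ q, μ.real (η ⁻¹' t ∩ C) * -Real.log (μ.real C) := by
        rw [Finset.sum_comm]
        refine Finset.sum_congr rfl fun C hC => Finset.sum_congr rfl fun t _ => ?_
        rw [inter_comm]
        rcases hη.preimage_inter_eq_self_or_empty hC t with h | h <;> simp [h, Real.negMulLog]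
    _ = ∑ C ∈ Q, Real.negMulLog (μ.real C) := by
        refine Finset.sum_congr rfl fun C _ => ?_
        rw [← Finset.sum_mul, hq.sum_measureReal_preimage_inter (hη.measurable hQ),
          Real.negMulLog, mul_neg, neg_mul]

theorem ConstOnCells.mutualInfo_le_entP [IsProbabilityMeasure μ] {Q : Finset (Set Ω)}
    (hη : ConstOnCells Q η) (hQ : IsFinPartition Q) (hξ : Measurable ξ) :
    mutualInfo μ ξ η ≤ entP μ Q := by
  rw [entP_eq_ofReal_sum_negMulLog]
  refine iSup₂_le fun p hp => iSup₂_le fun q hq => ENNReal.ofReal_le_ofReal ?_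
  exact (sum_sum_mul_log_le_sum_negMulLog hp hξ q).trans (hη.sum_negMulLog_preimage_le hQ hq)

end Information

section RateDistortion

variable {X : Type*} {T : X → X} {P : Finset (Set X)}

theorem mem_joinN {n : ℕ} {A : Set X} :
    A ∈ joinN T P n ↔ ∃ F : Fin n → Set X, (∀ k, F k ∈ P) ∧ ⋂ k : Fin n, T^[k] ⁻¹' F k = A := by
  simp only [joinN, Finset.mem_image, Fintype.mem_piFinset]

theorem isFinPartition_joinN [MeasurableSpace X] (hP : IsFinPartition P) (hT : Measurable T)
    (n : ℕ) : IsFinPartition (joinN T P n) := by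
  refine ⟨fun A hA => ?_, fun A hA B hB hAB => ?_, eq_univ_of_forall fun x => ?_⟩
  · obtain ⟨F, hF, rfl⟩ := mem_joinN.1 hA
    exact .iInter fun k => hT.iterate k (hP.1 _ (hF k))
  · obtain ⟨F, hF, rfl⟩ := mem_joinN.1 hA
    obtain ⟨G, hG, rfl⟩ := mem_joinN.1 hB
    refine disjoint_left.2 fun x hxF hxG => hAB ?_
    have hFG : F = G := funext fun k =>
      hP.eq_of_mem (hF k) (hG k) (mem_iInter.1 hxF k) (mem_iInter.1 hxG k)
    rw [hFG]
  · choose cell hcell hmem using hP.exists_mem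
    exact ⟨⋂ k : Fin n, T^[k] ⁻¹' cell (T^[k] x), mem_joinN.2 ⟨_, fun _ => hcell _, rfl⟩,
      mem_iInter.2 fun _ => hmem _⟩

/-- The word `(c x, c (T x), …, c (T^{n-1} x))` read by the observable `c` along the orbit
of `x`. -/
def orbitWord {Y : Type*} (T : X → X) (c : X → Y) (n : ℕ) (x : X) : Fin n → Y :=
  fun k => c (T^[k] x)

theorem ConstOnCells.joinN_orbitWord {Y : Type*} {c : X → Y} (hc : ConstOnCells P c) (n : ℕ) :
    ConstOnCells (joinN T P n) (orbitWord T c n) := by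
  intro A hA x hx y hy
  obtain ⟨F, hF, rfl⟩ := mem_joinN.1 hA
  exact funext fun k => hc _ (hF k) _ (mem_iInter.1 hx k) _ (mem_iInter.1 hy k)

variable [PseudoMetricSpace X] [MeasurableSpace X] {δ s : ℝ} {n : ℕ}

theorem RDistLInftyS_le_mutualInfo_div {Ω : Type*} [MeasurableSpace Ω] {ℙ : Measure Ω}
    [IsProbabilityMeasure ℙ] {ξ : Ω → X} {η : Ω → Fin n → X} (hn : 0 < n) (hξ : Measurable ξ)
    (hη : Measurable η) (hη_fin : ∀ k, (range fun ω => η ω k).Finite)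
    (hdist : ∫⁻ ω, (Nat.card {k : Fin n // δ ≤ dist (T^[k] (ξ ω)) (η ω k)} : ℝ≥0∞) ∂ℙ
      < ENNReal.ofReal (s * n)) :
    RDistLInftyS T (ℙ.map ξ) δ s ≤ mutualInfo ℙ ξ η / n := by
  have hξη : Measurable fun ω => (ξ ω, η ω) := hξ.prodMk hη
  have hprob := Measure.isProbabilityMeasure_map (μ := ℙ) hξη.aemeasurable
  refine iInf₂_le_of_le n hn <| iInf₂_le_of_le (ℙ.map fun ω => (ξ ω, η ω)) hprob <|
    iInf₂_le_of_le (Measure.map_map measurable_fst hξη) ?_ <|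
    iInf_le_of_le ((lintegral_map_le _ _).trans_lt hdist) ?_
  · refine ⟨(finite_iUnion hη_fin).toFinset, prob_le_one.antisymm ?_⟩
    refine le_trans ?_ (Measure.le_map_apply hξη.aemeasurable _)
    simp
  · rw [mutualInfo_map hξη measurable_fst measurable_snd]
    rfl

theorem RDistLInftyS_le_entP_joinN_div (hn : 0 < n) (hT : Measurable T) (μ : Measure X)
    [IsProbabilityMeasure μ] (hP : IsFinPartition P)
    (hPdist : ∀ A ∈ P, ∀ x ∈ A, ∀ y ∈ A, dist x y < δ) (hs : 0 < s) :
    RDistLInftyS T μ δ s ≤ entP μ (joinN T P n) / n := by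
  obtain ⟨c, hc, hc_mem⟩ := hP.exists_constOnCells_mem
  have hPn : IsFinPartition (joinN T P n) := isFinPartition_joinN hP hT n
  have hword : ConstOnCells (joinN T P n) (orbitWord T c n) := hc.joinN_orbitWord n
  have hword_fin : ∀ k, (range fun x => orbitWord T c n x k).Finite := fun k =>
    (hc.finite_range hP).subset (range_comp_subset_range _ c)
  have hclose : ∀ x, dist x (c x) < δ := fun x =>
    let ⟨A, hA, hx⟩ := hP.exists_mem x
    hPdist A hA x hx (c x) (hc_mem A hA x hx)
  have hdist : ∫⁻ x, (Nat.card {k : Fin n // δ ≤ dist (T^[k] x) (orbitWord T c n x k)} : ℝ≥0∞) ∂μ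
      < ENNReal.ofReal (s * n) := by
    have hpos : 0 < s * n := by positivity
    simpa [orbitWord, (hclose _).not_ge] using hpos
  calc RDistLInftyS T μ δ s = RDistLInftyS T (μ.map id) δ s := by rw [Measure.map_id]
    _ ≤ mutualInfo μ id (orbitWord T c n) / n :=
        RDistLInftyS_le_mutualInfo_div hn measurable_id (hword.measurable hPn) hword_fin hdist
    _ ≤ entP μ (joinN T P n) / n := by
        gcongr
        exact hword.mutualInfo_le_entP hPn measurable_id

end RateDistortion

end MMD

theorem stmt10_general {X : Type*} [PseudoMetricSpace X] [MeasurableSpace X] {T : X → X}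
    (hT : Measurable T) (μ : Measure X) [IsProbabilityMeasure μ] {δ : ℝ} {P : Finset (Set X)}
    (hP : IsFinPartition P) (hPdist : ∀ A ∈ P, ∀ x ∈ A, ∀ y ∈ A, dist x y < δ)
    {s : ℝ} (hs : 0 < s) :
    RDistLInftyS T μ δ s ≤ entRate T μ P :=
  le_liminf_of_le (by isBoundedDefault) <| (eventually_gt_atTop 0).mono fun _ hn =>
    RDistLInftyS_le_entP_joinN_div hn hT μ hP hPdist hs

/-- Key step in Proposition 3.4: for a finite Borel partition `P` with `diam P ≤ ε` and every
`s > 0`, `R_{μ,L∞}(2ε,s) ≤ h_μ(T,P)`. -/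
theorem stmt10 {X : Type*} [MetricSpace X] [CompactSpace X] [MeasurableSpace X] [BorelSpace X]
    (T : X → X) (hT : Continuous T)
    (μ : Measure X) (hμp : IsProbabilityMeasure μ) (hμinv : MeasurePreserving T μ μ)
    (ε : ℝ) (hε : 0 < ε)
    (P : Finset (Set X)) (hP : IsFinPartition P) (hPdiam : ∀ A ∈ P, Metric.diam A ≤ ε)
    (s : ℝ) (hs : 0 < s) :
    RDistLInftyS T μ (2 * ε) s ≤ entRate T μ P :=
  stmt10_general hT.measurable μ hP (fun A hA x hx y hy =>
    (Metric.dist_le_diam_of_mem Metric.isBounded_of_compactSpace hx hy).trans_lt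
      (by linarith [hPdiam A hA])) hs
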